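/- Let R be a Hecke symmetry with parameter q such that j_q ≠ 0 for 2 ≤ j ≤ k. Then the R-symmetrizer S^(k) is an idempotent, S^(k) S^(k) = S^(k), and it absorbs the lower symmetrizer: S^(k) S^(k−1) = S^(k−1) S^(k) = S^(k), where S^(k−1) acts in the first k−1 tensor factors of (ℂ^N)^{⊗k}. -/

import Mathlib

open Matrix BigOperators

noncomputable section

/-- An `N² × N²` complex matrix, viewed as an operator on `ℂ^N ⊗ ℂ^N`. -/
abbrev RMat (N : ℕ) := Matrix (Fin N × Fin N) (Fin N × Fin N) ℂ

/-- A matrix on the `k`-th tensor power of `ℂ^N`, with entries in `A`. -/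
abbrev TMat (N k : ℕ) (A : Type _) := Matrix (Fin k → Fin N) (Fin k → Fin N) A

/-- The `q`-number `j_q = (q^j - q^{-j})/(q - q^{-1})`. -/
def qNum (q : ℂ) (j : ℕ) : ℂ := (q ^ j - q⁻¹ ^ j) / (q - q⁻¹)

/-- Embedding of an `N²×N²` matrix `R` into the `k`-th tensor power,
acting in the (0-based) tensor factors `i` and `i+1`.  The paper's `R_i`
(1-based) is `embR k R (i-1)`. -/
def embR {N : ℕ} (k : ℕ) (R : RMat N) (i : ℕ) : TMat N k ℂ := fun f g =>
  if h : i + 1 < k then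
    if ∀ j : Fin k, j.val ≠ i → j.val ≠ i + 1 → f j = g j then
      R (f ⟨i, Nat.lt_of_succ_lt h⟩, f ⟨i + 1, h⟩) (g ⟨i, Nat.lt_of_succ_lt h⟩, g ⟨i + 1, h⟩)
    else 0
  else (1 : TMat N k ℂ) f g

/-- `X ⊗ I^{⊗(k-1)}` : the first copy `X_{1̄}` of an `N×N` matrix over `A`. -/
def emb1 {N : ℕ} (k : ℕ) {A : Type _} [Ring A] (X : Matrix (Fin N) (Fin N) A) :
    TMat N k A := fun f g =>
  if h : 0 < k then
    if ∀ j : Fin k, j.val ≠ 0 → f j = g j then X (f ⟨0, h⟩) (g ⟨0, h⟩) else 0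
  else (1 : TMat N k A) f g

/-- Lift a complex matrix to a matrix over the `ℂ`-algebra `A`. -/
def liftC {N k : ℕ} (A : Type _) [Ring A] [Algebra ℂ A] (X : TMat N k ℂ) : TMat N k A :=
  X.map (algebraMap ℂ A)

/-- The copies `X_{1̄}, X_{2̄}, …` of `X` in the `k`-th tensor power:
`copyX k R Rinv X i` is the paper's `X_{\overline{i+1}}`, i.e.
`X_{1̄} = X ⊗ I^{⊗(k-1)}` and `X_{\overline{i+1}} = R_i X_{ī} R_i⁻¹`. -/
def copyX {N : ℕ} (k : ℕ) (R Rinv : RMat N) {A : Type _} [Ring A] [Algebra ℂ A]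
    (X : Matrix (Fin N) (Fin N) A) : ℕ → TMat N k A
  | 0 => emb1 k X
  | i + 1 => liftC A (embR k R i) * copyX k R Rinv X i * liftC A (embR k Rinv i)

/-- The `R`-skew-symmetrizers, on the ambient `k`-th tensor power:
`Asym k R q j` is `A^{(j)}` (acting in the first `j` factors). -/
def Asym {N : ℕ} (k : ℕ) (R : RMat N) (q : ℂ) : ℕ → TMat N k ℂ
  | 0 => 1
  | 1 => 1
  | j + 2 =>
      (qNum q (j + 2))⁻¹ •
        (Asym k R q (j + 1) *
          ((q ^ (j + 1)) • (1 : TMat N k ℂ) - (qNum q (j + 1)) • embR k R j) *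
          Asym k R q (j + 1))

/-- The `R`-symmetrizers, on the ambient `k`-th tensor power:
`Ssym k R q j` is `S^{(j)}` (acting in the first `j` factors). -/
def Ssym {N : ℕ} (k : ℕ) (R : RMat N) (q : ℂ) : ℕ → TMat N k ℂ
  | 0 => 1
  | 1 => 1
  | j + 2 =>
      (qNum q (j + 2))⁻¹ •
        (Ssym k R q (j + 1) *
          ((q⁻¹ ^ (j + 1)) • (1 : TMat N k ℂ) + (qNum q (j + 1)) • embR k R j) *
          Ssym k R q (j + 1))

/-- The braid relation `R₁₂ R₂₃ R₁₂ = R₂₃ R₁₂ R₂₃` on `(ℂ^N)^{⊗3}`. -/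
def IsBraiding {N : ℕ} (R : RMat N) : Prop :=
  embR 3 R 0 * embR 3 R 1 * embR 3 R 0 = embR 3 R 1 * embR 3 R 0 * embR 3 R 1

/-- The Hecke condition `(q·I − R)(q⁻¹·I + R) = 0`. -/
def HeckeCond {N : ℕ} (R : RMat N) (q : ℂ) : Prop :=
  (q • (1 : RMat N) - R) * (q⁻¹ • (1 : RMat N) + R) = 0

/-- The Reflection Equation `R M₁ R M₁ = M₁ R M₁ R` (on `(ℂ^N)^{⊗2}`,
with entries in `A`). -/
def RERel {N : ℕ} (R : RMat N) {A : Type _} [Ring A] [Algebra ℂ A]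
    (M : Matrix (Fin N) (Fin N) A) : Prop :=
  liftC A (embR 2 R 0) * emb1 2 M * liftC A (embR 2 R 0) * emb1 2 M
    = emb1 2 M * liftC A (embR 2 R 0) * emb1 2 M * liftC A (embR 2 R 0)

/-- The relation `R⁻¹ D₁ R⁻¹ D₁ = D₁ R⁻¹ D₁ R⁻¹` on the matrix `D`,
where `Rinv = R⁻¹`. -/
def DDRel {N : ℕ} (Rinv : RMat N) {A : Type _} [Ring A] [Algebra ℂ A]
    (D : Matrix (Fin N) (Fin N) A) : Prop :=
  liftC A (embR 2 Rinv 0) * emb1 2 D * liftC A (embR 2 Rinv 0) * emb1 2 D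
    = emb1 2 D * liftC A (embR 2 Rinv 0) * emb1 2 D * liftC A (embR 2 Rinv 0)

/-- The permutation relations `D₁ R M₁ = R M₁ R⁻¹ D₁ R⁻¹ + I`, where `Rinv = R⁻¹`. -/
def PermRel {N : ℕ} (R Rinv : RMat N) {A : Type _} [Ring A] [Algebra ℂ A]
    (M D : Matrix (Fin N) (Fin N) A) : Prop :=
  emb1 2 D * liftC A (embR 2 R 0) * emb1 2 M
    = liftC A (embR 2 R 0) * emb1 2 M * liftC A (embR 2 Rinv 0) * emb1 2 D *
        liftC A (embR 2 Rinv 0) + 1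

/-- `Ψ` is the skew-inverse of `R`:  `Σ_{j,b} R^{ij}_{ab} Ψ^{bc}_{jd} = δ^i_d δ^c_a`. -/
def SkewInv {N : ℕ} (R Ψ : RMat N) : Prop :=
  ∀ i a c d : Fin N,
    (∑ j : Fin N, ∑ b : Fin N, R (i, j) (a, b) * Ψ (b, c) (j, d))
      = if i = d ∧ c = a then 1 else 0

/-- The matrix `C`, `C^c_d = Σ_i Ψ^{ic}_{id}`. -/
def Cmat {N : ℕ} (Ψ : RMat N) : Matrix (Fin N) (Fin N) ℂ :=
  fun c d => ∑ i : Fin N, Ψ (i, c) (i, d)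

/-- The `R`-trace over all `k` tensor factors: `⟨X⟩_{1…k} = Tr(C^{⊗k} X)`. -/
def rTr {N k : ℕ} {A : Type _} [Ring A] [Algebra ℂ A] (C : Matrix (Fin N) (Fin N) ℂ)
    (X : TMat N k A) : A :=
  ∑ f : Fin k → Fin N, ∑ g : Fin k → Fin N, (∏ j : Fin k, C (f j) (g j)) • X g f

/-- The chain `X_{1̄} X_{2̄} ⋯ X_{n̄}`. -/
def upChain {N : ℕ} (k : ℕ) (R Rinv : RMat N) {A : Type _} [Ring A] [Algebra ℂ A]
    (X : Matrix (Fin N) (Fin N) A) (n : ℕ) : TMat N k A :=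
  ((List.range n).map (copyX k R Rinv X)).prod

/-- The reversed chain `X_{n̄} X_{\overline{n-1}} ⋯ X_{1̄}`. -/
def downChain {N : ℕ} (k : ℕ) (R Rinv : RMat N) {A : Type _} [Ring A] [Algebra ℂ A]
    (X : Matrix (Fin N) (Fin N) A) (n : ℕ) : TMat N k A :=
  ((List.range n).reverse.map (copyX k R Rinv X)).prod

/-- The Capelli chain `L_{1̄}(L_{2̄} + q·1_q I)(L_{3̄} + q²·2_q I) ⋯ (L_{n̄} + q^{n-1}·(n-1)_q I)`
(note `0_q = 0`). -/
def capChainA {N : ℕ} (k : ℕ) (R Rinv : RMat N) (q : ℂ) {A : Type _} [Ring A] [Algebra ℂ A]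
    (L : Matrix (Fin N) (Fin N) A) (n : ℕ) : TMat N k A :=
  ((List.range n).map
    (fun i => copyX k R Rinv L i + ((q ^ i) * qNum q i) • (1 : TMat N k A))).prod

/-- The symmetric Capelli chain
`L_{1̄}(L_{2̄} - q⁻¹·1_q I) ⋯ (L_{n̄} - q^{-(n-1)}·(n-1)_q I)`. -/
def capChainS {N : ℕ} (k : ℕ) (R Rinv : RMat N) (q : ℂ) {A : Type _} [Ring A] [Algebra ℂ A]
    (L : Matrix (Fin N) (Fin N) A) (n : ℕ) : TMat N k A :=
  ((List.range n).map
    (fun i => copyX k R Rinv L i - ((q⁻¹ ^ i) * qNum q i) • (1 : TMat N k A))).prod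

/-- The descending chain `R_{a→b} = R_a R_{a-1} ⋯ R_b` (1-based indices;
identity when `b > a`). -/
def rChainDesc {N : ℕ} (k : ℕ) (R : RMat N) (a b : ℕ) : TMat N k ℂ :=
  ((List.range' b (a + 1 - b)).reverse.map (fun j => embR k R (j - 1))).prod

/-- The ascending chain `R_{b→a} = R_b R_{b+1} ⋯ R_a` (1-based indices;
identity when `b > a`). -/
def rChainAsc {N : ℕ} (k : ℕ) (R : RMat N) (b a : ℕ) : TMat N k ℂ :=
  ((List.range' b (a + 1 - b)).map (fun j => embR k R (j - 1))).prod

open Classical in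
/-- Embedding of an operator on `m` tensor factors along `σ`. -/
def embS {N m k : ℕ} (σ : Fin m → Fin k) (X : TMat N m ℂ) : TMat N k ℂ := fun f g =>
  if ∀ j, (∀ x, σ x ≠ j) → f j = g j then X (f ∘ σ) (g ∘ σ) else 0

theorem embS_mul {N m k : ℕ} (σ : Fin m → Fin k) (hσ : Function.Injective σ)
    (X Y : TMat N m ℂ) : embS σ (X * Y) = embS σ X * embS σ Y := by
  classical
  ext f g
  rw [Matrix.mul_apply]
  unfold embS
  by_cases hfg : ∀ j, (∀ x, σ x ≠ j) → f j = g j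
  · rw [if_pos hfg, Matrix.mul_apply]
    symm
    rw [← Finset.sum_filter_add_sum_filter_not Finset.univ
      (fun h : Fin k → Fin N => ∀ j, (∀ x, σ x ≠ j) → f j = h j)]
    rw [Finset.sum_eq_zero (s := Finset.filter (fun h : Fin k → Fin N =>
      ¬ ∀ j, (∀ x, σ x ≠ j) → f j = h j) Finset.univ), add_zero]
    · refine Finset.sum_bij' (fun h _ => h ∘ σ) (fun p _ => Function.extend σ p f)
        ?_ ?_ ?_ ?_ ?_
      · intro h _; exact Finset.mem_univ _
      · intro p _
        simp only [Finset.mem_filter, Finset.mem_univ, true_and]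
        intro j hj
        rw [Function.extend_apply']
        rintro ⟨x, hx⟩
        exact hj x hx
      · intro h hh
        simp only [Finset.mem_filter, Finset.mem_univ, true_and] at hh
        funext j
        by_cases hj : ∃ x, σ x = j
        · obtain ⟨x, rfl⟩ := hj
          rw [hσ.extend_apply]; rfl
        · rw [Function.extend_apply' _ _ _ hj]
          push Not at hj
          exact hh j hj
      · intro p _
        funext x
        simp [hσ.extend_apply]
      · intro h hh
        simp only [Finset.mem_filter, Finset.mem_univ, true_and] at hh
        rw [if_pos hh, if_pos]
        intro j hj
        rw [← hh j hj, hfg j hj]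
    · intro h hh
      simp only [Finset.mem_filter, Finset.mem_univ, true_and] at hh
      rw [if_neg hh, zero_mul]
  · rw [if_neg hfg]
    symm
    apply Finset.sum_eq_zero
    intro h _
    by_cases h1 : ∀ j, (∀ x, σ x ≠ j) → f j = h j
    · rw [if_neg (c := ∀ j, (∀ x, σ x ≠ j) → h j = g j), mul_zero]
      intro h2
      exact hfg fun j hj => (h1 j hj).trans (h2 j hj)
    · rw [if_neg h1, zero_mul]

theorem embS_one {N m k : ℕ} (σ : Fin m → Fin k) :
    embS σ (1 : TMat N m ℂ) = 1 := by
  classical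
  ext f g
  unfold embS
  by_cases h : f = g
  · subst h; simp
  · rw [Matrix.one_apply_ne h]
    split_ifs with h1
    · rw [Matrix.one_apply_ne]
      intro h2
      apply h
      funext j
      by_cases hj : ∃ x, σ x = j
      · obtain ⟨x, rfl⟩ := hj
        exact congrFun h2 x
      · push Not at hj
        exact h1 j hj
    · rfl

theorem embS_add {N m k : ℕ} (σ : Fin m → Fin k) (X Y : TMat N m ℂ) :
    embS σ (X + Y) = embS σ X + embS σ Y := by
  ext f g
  simp only [embS, Matrix.add_apply]
  split_ifs <;> simp

theorem embS_smul {N m k : ℕ} (σ : Fin m → Fin k) (c : ℂ) (X : TMat N m ℂ) :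
    embS σ (c • X) = c • embS σ X := by
  ext f g
  simp only [embS, Matrix.smul_apply]
  split_ifs <;> simp

open Classical in
theorem embS_mul_disj {N m n k : ℕ} (σ : Fin m → Fin k) (τ : Fin n → Fin k)
    (hd : ∀ x y, σ x ≠ τ y) (X : TMat N m ℂ) (Y : TMat N n ℂ) (f g : Fin k → Fin N) :
    (embS σ X * embS τ Y) f g =
      if ∀ j, (∀ x, σ x ≠ j) → (∀ y, τ y ≠ j) → f j = g j then
        X (f ∘ σ) (g ∘ σ) * Y (f ∘ τ) (g ∘ τ) else 0 := by
  rw [Matrix.mul_apply]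
  unfold embS
  rw [Finset.sum_eq_single (fun j => if ∃ x, σ x = j then g j else f j)]
  · have e1 : ∀ j, (∀ x, σ x ≠ j) → f j = (if ∃ x, σ x = j then g j else f j) := by
      intro j hj
      rw [if_neg]
      rintro ⟨x, hx⟩; exact hj x hx
    rw [if_pos e1]
    have e2 : (fun j => if ∃ x, σ x = j then g j else f j) ∘ σ = g ∘ σ := by
      funext x; simp
    have e3 : (fun j => if ∃ x, σ x = j then g j else f j) ∘ τ = f ∘ τ := by
      funext y
      have : ¬ ∃ x, σ x = τ y := by
        rintro ⟨x, hx⟩; exact hd x y hx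
      simp [this]
    rw [e2, e3]
    by_cases hc : ∀ j, (∀ x, σ x ≠ j) → (∀ y, τ y ≠ j) → f j = g j
    · rw [if_pos hc, if_pos]
      intro j hj
      beta_reduce
      by_cases hs : ∃ x, σ x = j
      · rw [if_pos hs]
      · rw [if_neg hs]
        push Not at hs
        exact hc j hs hj
    · rw [if_neg hc, if_neg, mul_zero]
      intro h2
      apply hc
      intro j h3 h4
      rw [← h2 j h4]
      exact e1 j h3
  · intro h _ hne
    by_cases h1 : ∀ j, (∀ x, σ x ≠ j) → f j = h j
    · rw [if_neg (c := ∀ j, (∀ x, τ x ≠ j) → h j = g j), mul_zero]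
      intro h2
      apply hne
      funext j
      by_cases hs : ∃ x, σ x = j
      · rw [if_pos hs]
        obtain ⟨x, rfl⟩ := hs
        exact h2 _ fun y hy => hd x y hy.symm
      · rw [if_neg hs]
        push Not at hs
        exact (h1 j hs).symm
    · rw [if_neg h1, zero_mul]
  · intro h; exact absurd (Finset.mem_univ _) h

theorem embS_comm {N m n k : ℕ} (σ : Fin m → Fin k) (τ : Fin n → Fin k)
    (hd : ∀ x y, σ x ≠ τ y) (X : TMat N m ℂ) (Y : TMat N n ℂ) :
    embS σ X * embS τ Y = embS τ Y * embS σ X := by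
  classical
  ext f g
  rw [embS_mul_disj σ τ hd, embS_mul_disj τ σ (fun x y h => hd y x h.symm)]
  rw [mul_comm]
  congr 1
  apply propext
  constructor <;> intro h j h1 h2 <;> exact h j h2 h1

/-- The shifted inclusion. -/
def shf {m k : ℕ} (i : ℕ) (h : i + m ≤ k) : Fin m → Fin k :=
  fun x => ⟨i + x.val, by have := x.isLt; omega⟩

theorem shf_inj {m k : ℕ} (i : ℕ) (h : i + m ≤ k) :
    Function.Injective (shf i h) := by
  intro x y hxy
  simp only [shf, Fin.mk.injEq] at hxy
  ext; omega

theorem embR_shf {N m k : ℕ} (R : RMat N) (i a : ℕ) (h : i + m ≤ k) (ha : a + 1 < m) :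
    embR k R (i + a) = embS (shf i h) (embR m R a) := by
  classical
  ext f g
  have hk : i + a + 1 < k := by omega
  simp only [embS, embR, dif_pos ha, dif_pos hk]
  have key : (∀ j : Fin k, j.val ≠ i + a → j.val ≠ i + a + 1 → f j = g j) ↔
      ((∀ j, (∀ x, shf i h x ≠ j) → f j = g j) ∧
        ∀ j : Fin m, j.val ≠ a → j.val ≠ a + 1 →
          (f ∘ shf i h) j = (g ∘ shf i h) j) := by
    constructor
    · intro H
      refine ⟨fun j hj => H j ?_ ?_, fun j h1 h2 => H _ ?_ ?_⟩
      · intro e; exact hj ⟨a, by omega⟩ (Fin.ext e.symm)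
      · intro e; exact hj ⟨a + 1, by omega⟩ (Fin.ext e.symm)
      · simp only [shf]; omega
      · simp only [shf]; omega
    · rintro ⟨H1, H2⟩ j h1 h2
      by_cases hj : ∃ x, shf i h x = j
      · obtain ⟨x, rfl⟩ := hj
        simp only [shf] at h1 h2
        exact H2 x (by omega) (by omega)
      · push Not at hj
        exact H1 j hj
  by_cases c1 : ∀ j, (∀ x, shf i h x ≠ j) → f j = g j
  · rw [if_pos c1]
    by_cases c2 : ∀ j : Fin m, j.val ≠ a → j.val ≠ a + 1 →
          (f ∘ shf i h) j = (g ∘ shf i h) j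
    · rw [if_pos c2, if_pos (key.2 ⟨c1, c2⟩)]; rfl
    · rw [if_neg c2, if_neg (fun H => c2 (key.1 H).2)]
  · rw [if_neg c1, if_neg (fun H => c1 (key.1 H).1)]

theorem embR_braid {N k : ℕ} (R : RMat N) (hbr : IsBraiding R) (i : ℕ) (h : i + 2 < k) :
    embR k R i * embR k R (i + 1) * embR k R i
      = embR k R (i + 1) * embR k R i * embR k R (i + 1) := by
  have h0 := embR_shf (m := 3) R i 0 (k := k) (by omega) (by omega)
  have h1 := embR_shf (m := 3) R i 1 (k := k) (by omega) (by omega)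
  rw [add_zero] at h0
  rw [h0, h1, ← embS_mul _ (shf_inj _ _), ← embS_mul _ (shf_inj _ _),
    ← embS_mul _ (shf_inj _ _), ← embS_mul _ (shf_inj _ _), hbr]

theorem embR_far {N k : ℕ} (R : RMat N) (i j : ℕ) (hij : i + 1 < j) (h : j + 1 < k) :
    embR k R i * embR k R j = embR k R j * embR k R i := by
  have h0 := embR_shf (m := 2) R i 0 (k := k) (by omega) (by omega)
  have h1 := embR_shf (m := 2) R j 0 (k := k) (by omega) (by omega)
  rw [add_zero] at h0 h1
  rw [h0, h1]
  apply embS_comm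
  intro x y e
  have := congrArg Fin.val e
  simp only [shf] at this
  have := x.isLt
  omega

theorem embR_two {N : ℕ} (R : RMat N) :
    embR 2 R 0 = Matrix.reindexAlgEquiv ℂ ℂ (finTwoArrowEquiv (Fin N)).symm R := by
  ext f g
  simp [embR, Fin.forall_fin_two, finTwoArrowEquiv]

theorem embR_hecke {N k : ℕ} (R : RMat N) (q : ℂ) (hH : HeckeCond R q) (i : ℕ)
    (h : i + 1 < k) :
    (q • (1 : TMat N k ℂ) - embR k R i) * (q⁻¹ • (1 : TMat N k ℂ) + embR k R i) = 0 := by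
  have h0 := embR_shf (m := 2) R i 0 (k := k) (by omega) (by omega)
  rw [add_zero] at h0
  have h2 := congrArg (Matrix.reindexAlgEquiv ℂ ℂ (finTwoArrowEquiv (Fin N)).symm) hH
  rw [map_mul, map_sub, map_add, map_smul, map_smul, map_one, map_zero, ← embR_two] at h2
  have h3 := congrArg (embS (shf i (show i + 2 ≤ k by omega))) h2
  have hz : embS (shf i (show i + 2 ≤ k by omega)) (0 : TMat N 2 ℂ) = 0 := by
    ext f g; simp [embS]
  rw [embS_mul _ (shf_inj _ _), sub_eq_add_neg, embS_add, embS_add, embS_smul, embS_smul,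
    embS_one, ← neg_one_smul ℂ (embR 2 R 0), embS_smul, ← h0, hz, neg_one_smul,
    ← sub_eq_add_neg] at h3
  exact h3

/-! ### The abstract Hecke algebra argument -/

theorem qNum_one' (q : ℂ) (hq : q - q⁻¹ ≠ 0) : qNum q 1 = 1 := by
  simp [qNum, div_self hq]

theorem qNum_succ' (q : ℂ) (hq0 : q ≠ 0) (hq : q - q⁻¹ ≠ 0) (j : ℕ) :
    q⁻¹ ^ j + q * qNum q j = qNum q (j + 1) := by
  unfold qNum
  rw [eq_div_iff hq, add_mul, mul_assoc, div_mul_cancel₀ _ hq, pow_succ, pow_succ]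
  have : q * q⁻¹ = 1 := mul_inv_cancel₀ hq0
  linear_combination (0 : ℂ) * this

theorem hecke_left {A : Type*} [Ring A] [Algebra ℂ A] (q : ℂ) (hq0 : q ≠ 0)
    (a b T U : A) (n : ℕ) (u d : ℂ) (hu : u ≠ 0)
    (ha : a * a = 1 + (q - q⁻¹) • a)
    (hbr : a * b * a = b * a * b) (hTa : T * a = a * T) (hTU : T * U = U)
    (hUU : U * U = U) (hbU : b * U = q • U)
    (hU : U = u⁻¹ • (T * (q⁻¹ ^ n • (1 : A) + d • b) * T)) :
    a * (U * (q⁻¹ ^ (n + 1) • (1 : A) + u • a) * U)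
      = q • (U * (q⁻¹ ^ (n + 1) • (1 : A) + u • a) * U) := by
  have h1 : u • (U * a * U) = T * (q⁻¹ ^ n • (a * U) + d • (b * a * U)) := by
    calc u • (U * a * U)
        = u • ((u⁻¹ • (T * (q⁻¹ ^ n • (1 : A) + d • b) * T)) * a * U) := by rw [← hU]
      _ = T * (q⁻¹ ^ n • (1 : A) + d • b) * (T * a) * U := by
          rw [smul_mul_assoc, smul_mul_assoc, smul_smul, mul_inv_cancel₀ hu, one_smul]
          simp only [mul_assoc]
      _ = T * (q⁻¹ ^ n • (1 : A) + d • b) * a * (T * U) := by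
          rw [hTa]; simp only [mul_assoc]
      _ = _ := by
          rw [hTU]
          simp only [mul_assoc, add_mul, smul_mul_assoc, one_mul]
  have h2 : U * (q⁻¹ ^ (n + 1) • (1 : A) + u • a) * U
      = T * (q⁻¹ ^ (n + 1) • U + q⁻¹ ^ n • (a * U) + d • (b * a * U)) := by
    rw [mul_add, add_mul, mul_smul_comm, mul_one, smul_mul_assoc, hUU, mul_smul_comm,
      smul_mul_assoc, h1, add_assoc, mul_add T (q⁻¹ ^ (n + 1) • U), mul_smul_comm, hTU]
  have h3 : a * (b * a * U) = q • (b * a * U) := by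
    rw [← mul_assoc, ← mul_assoc, hbr, mul_assoc, hbU, mul_smul_comm]
  have h4 : a * (a * U) = U + (q - q⁻¹) • (a * U) := by
    rw [← mul_assoc, ha, add_mul, one_mul, smul_mul_assoc]
  rw [h2, ← mul_assoc, ← hTa, mul_assoc, ← mul_smul_comm q T]
  congr 1
  rw [mul_add, mul_add, mul_smul_comm, mul_smul_comm, mul_smul_comm, h3, h4]
  have hqq : q * q⁻¹ ^ (n + 1) = q⁻¹ ^ n := by
    rw [pow_succ]; field_simp
  simp only [smul_add, smul_smul, hqq, mul_comm d q]
  rw [show q⁻¹ ^ n * (q - q⁻¹) = q * q⁻¹ ^ n - q⁻¹ ^ (n + 1) by rw [pow_succ]; ring, sub_smul]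
  abel

theorem hecke_right {A : Type*} [Ring A] [Algebra ℂ A] (q : ℂ) (hq0 : q ≠ 0)
    (a b T U : A) (n : ℕ) (u d : ℂ) (hu : u ≠ 0)
    (ha : a * a = 1 + (q - q⁻¹) • a)
    (hbr : a * b * a = b * a * b) (hTa : T * a = a * T) (hUT : U * T = U)
    (hUU : U * U = U) (hUb : U * b = q • U)
    (hU : U = u⁻¹ • (T * (q⁻¹ ^ n • (1 : A) + d • b) * T)) :
    (U * (q⁻¹ ^ (n + 1) • (1 : A) + u • a) * U) * a
      = q • (U * (q⁻¹ ^ (n + 1) • (1 : A) + u • a) * U) := by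
  have key := hecke_left (A := Aᵐᵒᵖ) q hq0 (MulOpposite.op a) (MulOpposite.op b)
    (MulOpposite.op T) (MulOpposite.op U) n u d hu
    (MulOpposite.unop_injective ha)
    (MulOpposite.unop_injective (by simpa [mul_assoc] using hbr))
    (MulOpposite.unop_injective hTa.symm)
    (MulOpposite.unop_injective hUT)
    (MulOpposite.unop_injective hUU)
    (MulOpposite.unop_injective hUb)
    (MulOpposite.unop_injective (by
      rw [mul_assoc]
      exact hU.trans (by rw [mul_assoc, ← mul_assoc]; rfl)))
  have key2 := congrArg MulOpposite.unop key
  rw [mul_assoc (MulOpposite.op U)] at key2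
  exact key2

theorem hecke_main {A : Type*} [Ring A] [Algebra ℂ A] (q : ℂ) (hq0 : q ≠ 0)
    (hq : q - q⁻¹ ≠ 0) (k : ℕ) (r S : ℕ → A)
    (hr : ∀ i, i + 1 < k → r i * r i = 1 + (q - q⁻¹) • r i)
    (hbr : ∀ i, i + 2 < k → r i * r (i + 1) * r i = r (i + 1) * r i * r (i + 1))
    (hfar : ∀ i j, i + 1 < j → j + 1 < k → r i * r j = r j * r i)
    (hqk : ∀ j : ℕ, 2 ≤ j → j ≤ k → qNum q j ≠ 0)
    (hS0 : S 0 = 1) (hS1 : S 1 = 1)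
    (hS : ∀ j, S (j + 2) = (qNum q (j + 2))⁻¹ • (S (j + 1) *
      (q⁻¹ ^ (j + 1) • (1 : A) + qNum q (j + 1) • r j) * S (j + 1)))
    (n : ℕ) (hn : n + 1 ≤ k) :
    S (n + 1) * S (n + 1) = S (n + 1) ∧
    S (n + 1) * S n = S (n + 1) ∧
    S n * S (n + 1) = S (n + 1) ∧
    (∀ i, i + 1 < n + 1 → r i * S (n + 1) = q • S (n + 1)) ∧
    (∀ i, i + 1 < n + 1 → S (n + 1) * r i = q • S (n + 1)) ∧
    (∀ i, n + 1 ≤ i → i + 1 < k → S (n + 1) * r i = r i * S (n + 1)) ∧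
    (∀ i, n ≤ i → i + 1 < k → S n * r i = r i * S n) := by
  induction n with
  | zero =>
    simp [hS0, hS1]
  | succ n ih =>
    obtain ⟨i1, i2, i3, i4, i5, i6, i7⟩ := ih (by omega)
    have hne : qNum q (n + 2) ≠ 0 := hqk _ (by omega) (by omega)
    have A1 : S (n + 2) * S (n + 1) = S (n + 2) := by
      rw [hS n, smul_mul_assoc, mul_assoc, i1]
    have A2 : S (n + 1) * S (n + 2) = S (n + 2) := by
      rw [hS n, mul_smul_comm, ← mul_assoc, ← mul_assoc, i1]
    have L : r n * S (n + 2) = q • S (n + 2) ∧ S (n + 2) * r n = q • S (n + 2) := by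
      rw [hS n, mul_smul_comm, smul_mul_assoc, smul_comm q]
      cases n with
      | zero =>
        have h0 := hr 0 (by omega)
        have e : q • (q⁻¹ • (1 : A) + r 0) = 1 + q • r 0 := by
          rw [smul_add, smul_smul, mul_inv_cancel₀ hq0, one_smul]
        simp only [zero_add, hS1, qNum_one' q hq, one_mul, mul_one, one_smul, pow_one]
        rw [e, mul_add, add_mul, h0, mul_smul_comm, smul_mul_assoc, mul_one, one_mul, sub_smul]
        constructor <;> (congr 1; abel)
      | succ m =>
        have hne' : qNum q (m + 1 + 1) ≠ 0 := hqk _ (by omega) (by omega)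
        have c := i7 (m + 1) le_rfl (by omega)
        have b := (hbr m (by omega)).symm
        constructor
        · congr 1
          exact hecke_left q hq0 (r (m + 1)) (r m) (S (m + 1)) (S (m + 1 + 1)) (m + 1)
            (qNum q (m + 1 + 1)) (qNum q (m + 1)) hne' (hr _ (by omega)) b c i3 i1
            (i4 m (by omega)) (hS m)
        · congr 1
          exact hecke_right q hq0 (r (m + 1)) (r m) (S (m + 1)) (S (m + 1 + 1)) (m + 1)
            (qNum q (m + 1 + 1)) (qNum q (m + 1)) hne' (hr _ (by omega)) b c i2 i1
            (i5 m (by omega)) (hS m)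
    refine ⟨?_, A1, A2, ?_, ?_, ?_, i6⟩
    · show S (n + 2) * S (n + 2) = S (n + 2)
      calc S (n + 2) * S (n + 2)
          = (qNum q (n + 2))⁻¹ • (S (n + 2) * S (n + 1) *
            (q⁻¹ ^ (n + 1) • (1 : A) + qNum q (n + 1) • r n) * S (n + 1)) := by
            conv_lhs => rw [hS n, mul_smul_comm, ← hS n]
            simp only [mul_assoc]
        _ = S (n + 2) := by
            rw [A1, mul_add, mul_smul_comm, mul_smul_comm, L.2, mul_one, smul_smul, ← add_smul,
              smul_mul_assoc, A1, smul_smul, mul_comm (qNum q (n + 1)) q,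
              qNum_succ' q hq0 hq, inv_mul_cancel₀ hne, one_smul]
    · intro i hi
      rcases Nat.lt_or_ge i n with h | h
      · show r i * S (n + 2) = q • S (n + 2)
        rw [← A2, ← mul_assoc, i4 i (by omega), smul_mul_assoc]
      · obtain rfl : i = n := by omega
        exact L.1
    · intro i hi
      rcases Nat.lt_or_ge i n with h | h
      · show S (n + 2) * r i = q • S (n + 2)
        rw [← A1, mul_assoc, i5 i (by omega), mul_smul_comm]
      · obtain rfl : i = n := by omega
        exact L.2
    · intro i hi hk
      have c1 : Commute (S (n + 1)) (r i) := i6 i (by omega) hk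
      have c2 : Commute (r n) (r i) := hfar n i (by omega) hk
      show S (n + 2) * r i = r i * S (n + 2)
      rw [hS n]
      exact (((c1.mul_left (((Commute.one_left _).smul_left _).add_left
        (c2.smul_left _))).mul_left c1).smul_left _).eq


/-- the symmetrizer is an idempotent and absorbs the lower
symmetrizer:  `S^(k) S^(k) = S^(k)` and `S^(k) S^(k−1) = S^(k−1) S^(k) = S^(k)`. -/
theorem statement11 {N : ℕ} (R Rinv : RMat N) (q : ℂ) (k : ℕ)
    (hq0 : q ≠ 0) (hq1 : q ≠ 1) (hqm1 : q ≠ -1)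
    (hinv : R * Rinv = 1) (hinv' : Rinv * R = 1)
    (hbr : IsBraiding R) (hH : HeckeCond R q)
    (hqk : ∀ j : ℕ, 2 ≤ j → j ≤ k → qNum q j ≠ 0) :
    Ssym k R q k * Ssym k R q k = Ssym k R q k ∧
    Ssym k R q k * Ssym k R q (k - 1) = Ssym k R q k ∧
    Ssym k R q (k - 1) * Ssym k R q k = Ssym k R q k := by
  have hq : q - q⁻¹ ≠ 0 := by
    intro h
    have h2 : q * q = 1 := by
      have : q = q⁻¹ := sub_eq_zero.mp h
      nth_rewrite 2 [this]
      exact mul_inv_cancel₀ hq0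
    rcases mul_self_eq_one_iff.mp h2 with h | h
    · exact hq1 h
    · exact hqm1 h
  cases k with
  | zero => simp [Ssym]
  | succ n =>
    have hr : ∀ i, i + 1 < n + 1 → embR (n + 1) R i * embR (n + 1) R i
        = 1 + (q - q⁻¹) • embR (n + 1) R i := by
      intro i hi
      have h := embR_hecke R q hH i hi
      rw [sub_mul, mul_add, mul_add, smul_mul_assoc, smul_mul_assoc, mul_smul_comm, mul_smul_comm,
        one_mul, one_mul, mul_one, smul_smul, mul_inv_cancel₀ hq0, one_smul] at h
      rw [sub_smul]
      have h2 := (sub_eq_zero.mp h).symm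
      rw [← eq_sub_iff_add_eq'] at h2
      rw [h2]; abel
    obtain ⟨h1, h2, h3, -⟩ := hecke_main q hq0 hq (n + 1) (embR (n + 1) R) (Ssym (n + 1) R q) hr
      (fun i hi => embR_braid R hbr i hi) (fun i j hij hj => embR_far R i j hij hj) hqk
      (by simp only [Ssym]) (by simp only [Ssym]) (fun j => by simp only [Ssym]) n le_rfl
    exact ⟨h1, h2, h3⟩
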